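/- arXiv:0911.3773 — 3 statements merged into one kernel-verified Lean document; each statement's English description precedes it below -/
import Mathlib

section
/- (Triplication formula) For all real θ, (1/3)·Cl₂(3θ) = Cl₂(θ) + Cl₂(θ + 2π/3) + Cl₂(θ - 2π/3). -/
open Real

noncomputable def Cl2 (θ : ℝ) : ℝ := ∑' m : ℕ, Real.sin ((m + 1) * θ) / (m + 1) ^ 2

/-!
Adding the three series termwise, the `n`-th numerator is
`sin (nθ) + sin (n(θ + 2π/3)) + sin (n(θ - 2π/3)) = sin (nθ) (1 + 2 cos (2πn/3))`.
The factor `1 + 2 cos (2πn/3)` is the sum of the `n`-th powers of the cube roots of unity, so it is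
`3` when `3 ∣ n` and `0` otherwise. Only the terms `n = 3k` survive, and there
`3 sin (3kθ) / (3k)² = (1/3) sin (k · 3θ) / k²`.
-/

lemma summable_Cl2 (θ : ℝ) :
    Summable fun m : ℕ => Real.sin ((m + 1) * θ) / ((m : ℝ) + 1) ^ 2 := by
  have h : Summable fun m : ℕ => 1 / ((m : ℝ) + 1) ^ 2 := by
    have := (summable_nat_add_iff 1).2 (Real.summable_one_div_nat_pow.2 one_lt_two)
    simpa using this
  refine h.of_norm_bounded fun m => ?_
  rw [Real.norm_eq_abs, abs_div, abs_of_nonneg (by positivity : (0 : ℝ) ≤ ((m : ℝ) + 1) ^ 2)]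
  gcongr
  exact Real.abs_sin_le_one _

lemma cos_two_pi_div_three : Real.cos (2 * π / 3) = -(1 / 2) := by
  rw [show 2 * π / 3 = π - π / 3 by ring, Real.cos_pi_sub, Real.cos_pi_div_three]

lemma cos_multiple_of_three (q : ℕ) : Real.cos ((3 * q : ℝ) * (2 * π / 3)) = 1 := by
  rw [show (3 * q : ℝ) * (2 * π / 3) = q * (2 * π) by ring, Real.cos_nat_mul_two_pi]

lemma cos_not_multiple_of_three {n : ℕ} (hn : ¬ 3 ∣ n) :
    Real.cos ((n : ℝ) * (2 * π / 3)) = -(1 / 2) := by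
  obtain ⟨q, rfl | rfl⟩ : ∃ q, n = 3 * q + 1 ∨ n = 3 * q + 2 := ⟨n / 3, by omega⟩
  · rw [show ((3 * q + 1 : ℕ) : ℝ) * (2 * π / 3) = 2 * π / 3 + q * (2 * π) by push_cast; ring,
      Real.cos_add_nat_mul_two_pi, cos_two_pi_div_three]
  · rw [show ((3 * q + 2 : ℕ) : ℝ) * (2 * π / 3) = (q + 1 : ℕ) * (2 * π) - 2 * π / 3 by
        push_cast; ring,
      Real.cos_nat_mul_two_pi_sub, cos_two_pi_div_three]

theorem stmt7 (θ : ℝ) :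
    (1 / 3) * Cl2 (3 * θ) = Cl2 θ + Cl2 (θ + 2 * π / 3) + Cl2 (θ - 2 * π / 3) := by
  unfold Cl2
  rw [← (summable_Cl2 θ).tsum_add (summable_Cl2 _),
    ← ((summable_Cl2 θ).add (summable_Cl2 _)).tsum_add (summable_Cl2 _), ← tsum_mul_left]
  have key (m : ℕ) : Real.sin ((m + 1) * θ) / ((m : ℝ) + 1) ^ 2
      + Real.sin ((m + 1) * (θ + 2 * π / 3)) / ((m : ℝ) + 1) ^ 2
      + Real.sin ((m + 1) * (θ - 2 * π / 3)) / ((m : ℝ) + 1) ^ 2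
      = Real.sin ((m + 1) * θ) * (1 + 2 * Real.cos (((m + 1 : ℕ) : ℝ) * (2 * π / 3)))
        / ((m : ℝ) + 1) ^ 2 := by
    rw [mul_add, mul_sub, Real.sin_add, Real.sin_sub]
    push_cast
    ring
  simp_rw [key]
  -- The index `m` stands for `n = m + 1`, so `n = 3 (k + 1)` corresponds to `m = 3 k + 2`.
  have hinj : Function.Injective fun k : ℕ => 3 * k + 2 := fun a b h => by
    simp only at h
    omega
  symm
  rw [← hinj.tsum_eq]
  · refine tsum_congr fun k => ?_
    rw [show ((3 * k + 2 + 1 : ℕ) : ℝ) = 3 * ((k + 1 : ℕ) : ℝ) by push_cast; ring,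
      cos_multiple_of_three]
    push_cast
    rw [show (3 * (k : ℝ) + 2 + 1) = 3 * (k + 1) by ring,
      show 3 * ((k : ℝ) + 1) * θ = (k + 1) * (3 * θ) by ring]
    have : (k : ℝ) + 1 ≠ 0 := by positivity
    field_simp
    ring
  · intro m hm
    by_contra hr
    refine hm ?_
    have h3 : ¬ 3 ∣ m + 1 := fun ⟨c, hc⟩ => hr ⟨c - 1, by simp only; omega⟩
    simp only [cos_not_multiple_of_three h3]
    norm_num
end

section
/- For 0 < φ < x < π/2, ∫_φ^x ln((tan θ + tan φ)/(tan θ - tan φ)) dθ = -(1/2)Cl₂(2x + 2φ) + (1/2)Cl₂(2x - 2φ) + (1/2)Cl₂(4φ). -/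
open Real

/-!
By the addition formula, `(tan θ + tan φ) / (tan θ - tan φ) = sin (θ + φ) / sin (θ - φ)`, so the
integrand is `g (2θ + 2φ) - g (2θ - 2φ)` with `g t = log (2 sin (t / 2))`, and a linear change of
variables reduces the claim to `Cl2 θ = -∫₀^θ g` on `[0, 2π)` (`Cl2_eq_integral`).

The Clausen function is defined by its Fourier series, so this integral representation has to be
derived. It comes from Abel summation: for `0 ≤ r < 1` the series
`∑ rⁿ cos (n t) / n = -log |1 - r exp (i t)|` (`hasSum_cos_abel`) may be integrated term by term
(`hasSum_sin_abel`), and then `r → 1⁻`. The sum passes to the limit by domination by `∑ 1 / n²`, and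
the integral by the estimate `2 sin² (t / 2) ≤ |1 - r exp (i t)|² ≤ 4` for `1 / 2 ≤ r ≤ 1`, whose
bounds have integrable logarithms.
-/

/-- The squared modulus `|1 - r exp (i t)|²`, written so that its limit `4 sin² (t / 2)` as `r → 1`
and its lower bounds are visible. -/
noncomputable def abelSq (r t : ℝ) : ℝ := (1 - r) ^ 2 + 4 * r * sin (t / 2) ^ 2

lemma norm_one_sub_sq (r t : ℝ) :
    ‖1 - (r : ℂ) * Complex.exp (t * Complex.I)‖ ^ 2 = abelSq r t := by
  rw [← Complex.normSq_eq_norm_sq, Complex.exp_mul_I, ← Complex.ofReal_cos, ← Complex.ofReal_sin,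
    Complex.normSq_apply]
  have h1 : cos t = 1 - 2 * sin (t / 2) ^ 2 := by
    have := Real.cos_two_mul (t / 2)
    have h := Real.sin_sq_add_cos_sq (t / 2)
    rw [show 2 * (t / 2) = t by ring] at this
    linarith
  have h2 := Real.sin_sq_add_cos_sq t
  simp only [abelSq, Complex.sub_re, Complex.sub_im, Complex.one_re, Complex.one_im,
    Complex.re_ofReal_mul, Complex.im_ofReal_mul, Complex.add_re, Complex.add_im,
    Complex.ofReal_re, Complex.ofReal_im,
    Complex.I_re, Complex.I_im]
  linear_combination r ^ 2 * h2 - 2 * r * h1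

lemma hasSum_cos_abel {r : ℝ} (h0 : 0 ≤ r) (h1 : r < 1) (t : ℝ) :
    HasSum (fun n : ℕ => r ^ (n + 1) * cos ((n + 1) * t) / (n + 1))
      (-(1 / 2) * log (abelSq r t)) := by
  have hz : ‖(r : ℂ) * Complex.exp (t * Complex.I)‖ < 1 := by
    rw [norm_mul, Complex.norm_exp_ofReal_mul_I, Complex.norm_real, Real.norm_eq_abs,
      abs_of_nonneg h0, mul_one]
    exact h1
  have h := Complex.hasSum_re (Complex.hasSum_taylorSeries_neg_log hz)
  rw [← hasSum_nat_add_iff' 1] at h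
  simp only [Finset.range_one, Finset.sum_singleton, pow_zero, Nat.cast_zero, div_zero,
    Complex.zero_re, sub_zero, Complex.neg_re, Complex.log_re] at h
  have hlog : -(1 / 2) * log (abelSq r t) = -log ‖1 - (r : ℂ) * Complex.exp (t * Complex.I)‖ := by
    rw [← norm_one_sub_sq, Real.log_pow]
    push_cast
    ring
  rw [hlog]
  refine h.congr_fun fun n => ?_
  rw [mul_pow, ← Complex.exp_nat_mul, ← Complex.ofReal_pow,
    show ((n + 1 : ℕ) : ℂ) * (t * Complex.I) = (((n + 1) * t : ℝ) : ℂ) * Complex.I by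
      push_cast; ring,
    show ((n + 1 : ℕ) : ℂ) = ((n + 1 : ℝ) : ℂ) by push_cast; rfl,
    Complex.div_ofReal_re, Complex.re_ofReal_mul, Complex.exp_ofReal_mul_I_re]

lemma hasSum_sin_abel {r : ℝ} (h0 : 0 ≤ r) (h1 : r < 1) (θ : ℝ) :
    HasSum (fun n : ℕ => r ^ (n + 1) * sin ((n + 1) * θ) / (n + 1) ^ 2)
      (∫ t in (0)..θ, -(1 / 2) * log (abelSq r t)) := by
  have h := intervalIntegral.hasSum_integral_of_dominated_convergence
    (μ := MeasureTheory.volume) (a := 0) (b := θ)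
    (F := fun (n : ℕ) t => r ^ (n + 1) * cos ((n + 1) * t) / (n + 1))
    (f := fun t => -(1 / 2) * log (abelSq r t))
    (bound := fun n _ => r ^ (n + 1))
    (fun n => (by fun_prop : Continuous fun t : ℝ =>
      r ^ (n + 1) * cos ((n + 1) * t) / ((n : ℝ) + 1)).aestronglyMeasurable)
    (fun n => Filter.Eventually.of_forall fun t _ => by
      have hn : (1 : ℝ) ≤ n + 1 := by simp
      have hp : 0 ≤ r ^ (n + 1) := by positivity
      rw [norm_div, norm_mul, Real.norm_of_nonneg hp,
        Real.norm_of_nonneg (show (0 : ℝ) ≤ n + 1 by positivity), Real.norm_eq_abs]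
      refine (div_le_self (by positivity) hn).trans ?_
      exact mul_le_of_le_one_right hp (abs_cos_le_one _))
    (Filter.Eventually.of_forall fun t _ =>
      (summable_nat_add_iff 1).2 (summable_geometric_of_lt_one h0 h1))
    (by simp)
    (Filter.Eventually.of_forall fun t _ => hasSum_cos_abel h0 h1 t)
  refine h.congr_fun fun n => ?_
  have hn : (n + 1 : ℝ) ≠ 0 := by positivity
  rw [intervalIntegral.integral_div, intervalIntegral.integral_const_mul,
    intervalIntegral.integral_comp_mul_left (fun u => cos u) hn, integral_cos]
  simp
  field_simp

lemma tendsto_Cl2_abel (θ : ℝ) :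
    Filter.Tendsto (fun r : ℝ => ∑' n : ℕ, r ^ (n + 1) * sin ((n + 1) * θ) / (n + 1) ^ 2)
      (nhdsWithin 1 (Set.Iio 1)) (nhds (Cl2 θ)) := by
  refine tendsto_tsum_of_dominated_convergence (bound := fun n : ℕ => 1 / ((n : ℝ) + 1) ^ 2)
    ?_ ?_ ?_
  · have := (summable_nat_add_iff 1).2 (Real.summable_one_div_nat_pow.2 (one_lt_two))
    simpa using this
  · intro n
    have : Continuous fun r : ℝ => r ^ (n + 1) * sin ((n + 1) * θ) / ((n : ℝ) + 1) ^ 2 := by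
      fun_prop
    have h := (this.tendsto 1).mono_left (nhdsWithin_le_nhds (s := Set.Iio 1))
    simpa using h
  · filter_upwards [Ioo_mem_nhdsLT (show (0 : ℝ) < 1 by norm_num)] with r hr n
    have hp : 0 ≤ r ^ (n + 1) := pow_nonneg hr.1.le _
    rw [norm_div, norm_mul, Real.norm_of_nonneg hp,
      Real.norm_of_nonneg (show 0 ≤ ((n : ℝ) + 1) ^ 2 by positivity), Real.norm_eq_abs]
    gcongr
    exact mul_le_one₀ (pow_le_one₀ hr.1.le hr.2.le) (abs_nonneg _) (abs_sin_le_one _)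

lemma intervalIntegrable_log_mul_sin_half (c a b : ℝ) :
    IntervalIntegrable (fun t => log (c * sin (t / 2))) MeasureTheory.volume a b := by
  have : AnalyticOnNhd ℝ (fun t => c * sin (t / 2)) Set.univ := fun t _ => by fun_prop
  exact (this.mono (Set.subset_univ _)).meromorphicOn.intervalIntegrable_log

/-- Passage to the limit `r → 1⁻` on the integral side. -/
lemma tendsto_integral_abel {θ : ℝ} (h0 : 0 ≤ θ) (h1 : θ < 2 * π) :
    Filter.Tendsto (fun r : ℝ => ∫ t in (0)..θ, -(1 / 2) * log (abelSq r t))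
      (nhdsWithin 1 (Set.Iio 1)) (nhds (∫ t in (0)..θ, -log (2 * sin (t / 2)))) := by
  have hpos : ∀ t ∈ Set.uIoc 0 θ, 0 < sin (t / 2) := fun t ht => by
    rw [Set.uIoc_of_le h0] at ht
    exact sin_pos_of_pos_of_lt_pi (by linarith [ht.1]) (by linarith [ht.2])
  refine intervalIntegral.tendsto_integral_filter_of_dominated_convergence
    (fun t => log 4 + |log (2 * sin (t / 2) ^ 2)|) ?_ ?_ ?_ ?_
  · refine Filter.Eventually.of_forall fun r => Measurable.aestronglyMeasurable ?_
    unfold abelSq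
    fun_prop
  · filter_upwards [Ioo_mem_nhdsLT (show (1 / 2 : ℝ) < 1 by norm_num)] with r hr
    refine Filter.Eventually.of_forall fun t ht => ?_
    have hs := hpos t ht
    have hs2 : 0 < sin (t / 2) ^ 2 := by positivity
    have hs1 : sin (t / 2) ^ 2 ≤ 1 := sin_sq_le_one _
    have hlo : 2 * sin (t / 2) ^ 2 ≤ abelSq r t := by
      unfold abelSq
      nlinarith [sq_nonneg (1 - r), hr.1]
    have hhi : abelSq r t ≤ 4 := by
      unfold abelSq
      nlinarith [hr.1, hr.2]
    have l1 := log_le_log (by positivity) hlo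
    have l2 := log_le_log (lt_of_lt_of_le (by positivity) hlo) hhi
    have l4 : 0 ≤ log 4 := log_nonneg (by norm_num)
    have l3 := neg_abs_le (log (2 * sin (t / 2) ^ 2))
    have l5 := abs_nonneg (log (2 * sin (t / 2) ^ 2))
    rw [Real.norm_eq_abs, abs_le]
    constructor <;> linarith
  · have : AnalyticOnNhd ℝ (fun t => 2 * sin (t / 2) ^ 2) Set.univ := fun t _ => by fun_prop
    exact intervalIntegrable_const.add
      (this.mono (Set.subset_univ _)).meromorphicOn.intervalIntegrable_log.abs
  · refine Filter.Eventually.of_forall fun t ht => ?_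
    have hs := hpos t ht
    have hc : ContinuousAt (fun r => -(1 / 2) * log (abelSq r t)) 1 := by
      refine ContinuousAt.mul continuousAt_const (ContinuousAt.log ?_ ?_)
      · unfold abelSq; fun_prop
      · simp [abelSq, hs.ne']
    have h := hc.tendsto.mono_left (nhdsWithin_le_nhds (s := Set.Iio 1))
    have e : -(1 / 2) * log (abelSq 1 t) = -log (2 * sin (t / 2)) := by
      rw [show abelSq 1 t = (2 * sin (t / 2)) ^ 2 by unfold abelSq; ring, log_pow]
      push_cast; ring
    rwa [e] at h

/-- The integral representation of the Clausen function. -/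
lemma Cl2_eq_integral {θ : ℝ} (h0 : 0 ≤ θ) (h1 : θ < 2 * π) :
    Cl2 θ = -∫ t in (0)..θ, log (2 * sin (t / 2)) := by
  rw [← intervalIntegral.integral_neg]
  refine tendsto_nhds_unique (tendsto_Cl2_abel θ) ((tendsto_integral_abel h0 h1).congr' ?_)
  filter_upwards [Ioo_mem_nhdsLT (show (0 : ℝ) < 1 by norm_num)] with r hr
  exact (hasSum_sin_abel hr.1.le hr.2 θ).tsum_eq.symm

lemma tan_add_div_tan_sub {θ φ : ℝ} (hθ : cos θ ≠ 0) (hφ : cos φ ≠ 0) :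
    (tan θ + tan φ) / (tan θ - tan φ) = sin (θ + φ) / sin (θ - φ) := by
  have hc : cos θ * cos φ ≠ 0 := mul_ne_zero hθ hφ
  rw [sin_add, sin_sub, tan_eq_sin_div_cos, tan_eq_sin_div_cos, div_add_div _ _ hθ hφ,
    div_sub_div _ _ hθ hφ, div_div_div_cancel_right₀ hc]

theorem stmt10 (φ x : ℝ) (h1 : 0 < φ) (h2 : φ < x) (h3 : x < π / 2) :
    ∫ θ in φ..x, Real.log ((Real.tan θ + Real.tan φ) / (Real.tan θ - Real.tan φ)) =
      -(1 / 2) * Cl2 (2 * x + 2 * φ) + (1 / 2) * Cl2 (2 * x - 2 * φ)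
        + (1 / 2) * Cl2 (4 * φ) := by
  have hcongr : ∫ θ in φ..x, log ((tan θ + tan φ) / (tan θ - tan φ)) =
      ∫ θ in φ..x, (log (2 * sin ((2 * θ + 2 * φ) / 2)) -
        log (2 * sin ((2 * θ + -(2 * φ)) / 2))) := by
    -- The open interval avoids the singularity of the integrand at `θ = φ`.
    refine intervalIntegral.integral_congr_Ioo_of_le h2.le fun θ hθ => ?_
    have hs1 : 0 < sin (θ + φ) :=
      sin_pos_of_pos_of_lt_pi (by linarith [hθ.1]) (by linarith [hθ.2])
    have hs2 : 0 < sin (θ - φ) :=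
      sin_pos_of_pos_of_lt_pi (by linarith [hθ.1]) (by linarith [hθ.2])
    have hc1 : 0 < cos θ := cos_pos_of_mem_Ioo ⟨by linarith [hθ.1], by linarith [hθ.2]⟩
    have hc2 : 0 < cos φ := cos_pos_of_mem_Ioo ⟨by linarith, by linarith⟩
    rw [tan_add_div_tan_sub hc1.ne' hc2.ne', show (2 * θ + 2 * φ) / 2 = θ + φ by ring,
      show (2 * θ + -(2 * φ)) / 2 = θ - φ by ring, log_mul two_ne_zero hs1.ne',
      log_mul two_ne_zero hs2.ne', log_div hs1.ne' hs2.ne']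
    ring
  have hint : ∀ c : ℝ, IntervalIntegrable (fun θ => log (2 * sin ((2 * θ + c) / 2)))
      MeasureTheory.volume φ x := fun c => by
    have : AnalyticOnNhd ℝ (fun t => 2 * sin ((2 * t + c) / 2)) Set.univ := fun t _ => by
      fun_prop
    exact (this.mono (Set.subset_univ _)).meromorphicOn.intervalIntegrable_log
  have hI := intervalIntegrable_log_mul_sin_half 2
  rw [hcongr, intervalIntegral.integral_sub (hint _) (hint _),
    intervalIntegral.integral_comp_mul_add (fun u => log (2 * sin (u / 2))) two_ne_zero,
    intervalIntegral.integral_comp_mul_add (fun u => log (2 * sin (u / 2))) two_ne_zero,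
    Cl2_eq_integral (by linarith) (by linarith), Cl2_eq_integral (by linarith) (by linarith),
    Cl2_eq_integral (by linarith) (by linarith),
    ← intervalIntegral.integral_interval_sub_left (hI 0 (2 * x + 2 * φ)) (hI 0 (2 * φ + 2 * φ)),
    show 2 * φ + -(2 * φ) = 0 by ring, show 2 * φ + 2 * φ = 4 * φ by ring,
    show 2 * x + -(2 * φ) = 2 * x - 2 * φ by ring]
  simp only [smul_eq_mul]
  ring
end

section
/- With φ₇ = arctan(√7), ∫_{π/3}^{π/2} ln|(tan θ + √7)/(tan θ - √7)| dθ = (1/2)[Cl₂(2φ₇ + 2π/3) + Cl₂(2φ₇ - 2π/3)] - Cl₂(π + 2φ₇). -/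
/-!
Since `(tan θ + tan φ) / (tan θ - tan φ) = sin (θ + φ) / sin (θ - φ)` with `φ = arctan √7`, and
`4 sin² y = 2 - 2 cos (2 y)`, the integrand is almost everywhere
`(log (2 - 2 cos (2 θ + 2 φ)) - log (2 - 2 cos (2 θ - 2 φ))) / 2`. The claim therefore follows from

  `∫ t in a..b, log (2 - 2 cos t) = -2 (Cl2 b - Cl2 a)`      (`integral_log_two_sub`)

together with the oddness and `2π`-periodicity of `Cl2`.

That formula is proved by Abel summation. For `0 < r < 1` the Taylor series of `log (1 - z)` at
`z = r exp (i t)` is integrated termwise (`abel_integral`), and then `r → 1⁻`. On the series side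
the passage to the limit is Tannery's theorem with the bound `2 / n²`. On the integral side it is
dominated convergence: `sin² t ≤ 1 - 2 r cos t + r² ≤ 4`, so the logarithm is dominated by
`log 4 + 2 |log |sin t||`, which is integrable although `log (2 - 2 cos t)` has singularities.
-/

open Real

open Filter Topology MeasureTheory

/-- The real part of the Taylor series of `-log (1 - z)` at `z = r exp (i t)`. -/
lemma hasSum_cos_log {r : ℝ} (h0 : 0 < r) (h1 : r < 1) (t : ℝ) :
    HasSum (fun m : ℕ => r ^ (m + 1) * Real.cos ((m + 1) * t) / (m + 1))
      (-(1 / 2) * Real.log (1 - 2 * r * Real.cos t + r ^ 2)) := by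
  have hz : ‖(r : ℂ) * Complex.exp (t * Complex.I)‖ < 1 := by
    rw [norm_mul, Complex.norm_exp_ofReal_mul_I, Complex.norm_real, Real.norm_eq_abs,
      abs_of_pos h0]
    simpa using h1
  have h := Complex.hasSum_re (Complex.hasSum_taylorSeries_neg_log' hz)
  convert! h using 1
  · funext m
    have e : ((r : ℂ) * Complex.exp (t * Complex.I)) ^ (m + 1) / ((m : ℂ) + 1)
        = ((r ^ (m + 1) / (m + 1) : ℝ) : ℂ) *
          Complex.exp ((((m + 1) * t : ℝ) : ℂ) * Complex.I) := by
      rw [mul_pow, ← Complex.exp_nat_mul]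
      push_cast
      rw [mul_assoc ((m : ℂ) + 1)]
      ring
    rw [e, Complex.re_ofReal_mul, Complex.exp_ofReal_mul_I_re]
    ring
  · rw [Complex.neg_re, Complex.log_re]
    have e : 1 - 2 * r * Real.cos t + r ^ 2
        = ‖1 - (r : ℂ) * Complex.exp (t * Complex.I)‖ ^ 2 := by
      rw [← Complex.normSq_eq_norm_sq, Complex.normSq_apply]
      simp only [Complex.sub_re, Complex.sub_im, Complex.re_ofReal_mul, Complex.im_ofReal_mul,
        Complex.exp_ofReal_mul_I_re, Complex.exp_ofReal_mul_I_im, Complex.one_re, Complex.one_im]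
      linear_combination (-r ^ 2) * Real.sin_sq_add_cos_sq t
    rw [e, Real.log_pow]
    push_cast
    ring

lemma abel_integral {r : ℝ} (h0 : 0 < r) (h1 : r < 1) (a b : ℝ) :
    ∫ t in a..b, Real.log (1 - 2 * r * Real.cos t + r ^ 2) =
      -2 * ∑' m : ℕ, r ^ (m + 1) *
        ((Real.sin ((m + 1) * b) - Real.sin ((m + 1) * a)) / (m + 1) ^ 2) := by
  have hs : HasSum (fun m : ℕ => ∫ t in a..b, r ^ (m + 1) * Real.cos ((m + 1) * t) / (m + 1))
      (∫ t in a..b, -(1 / 2) * Real.log (1 - 2 * r * Real.cos t + r ^ 2)) := by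
    refine intervalIntegral.hasSum_integral_of_dominated_convergence
      (fun m _ => r ^ (m + 1)) (fun m => ?_) (fun m => ?_) ?_ ?_ ?_
    · exact (by fun_prop : Continuous fun t : ℝ =>
        r ^ (m + 1) * Real.cos ((m + 1) * t) / (m + 1)).aestronglyMeasurable
    · refine Eventually.of_forall fun t _ => ?_
      have hp : 0 < r ^ (m + 1) := by positivity
      have hm : (1 : ℝ) ≤ m + 1 := by linarith [(Nat.cast_nonneg m : (0 : ℝ) ≤ m)]
      rw [norm_div, norm_mul, Real.norm_eq_abs, Real.norm_eq_abs, Real.norm_eq_abs,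
        abs_of_pos hp, abs_of_pos (by linarith : (0 : ℝ) < m + 1)]
      exact (div_le_self (by positivity) hm).trans
        (mul_le_of_le_one_right hp.le (Real.abs_cos_le_one _))
    · exact Eventually.of_forall fun t _ =>
        (summable_nat_add_iff 1).2 (summable_geometric_of_lt_one h0.le h1)
    · exact intervalIntegrable_const
    · exact Eventually.of_forall fun t _ => hasSum_cos_log h0 h1 t
  rw [intervalIntegral.integral_const_mul] at hs
  have e : ∀ m : ℕ, ∫ t in a..b, r ^ (m + 1) * Real.cos ((m + 1) * t) / (m + 1) =
      r ^ (m + 1) * ((Real.sin ((m + 1) * b) - Real.sin ((m + 1) * a)) / (m + 1) ^ 2) := by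
    intro m
    have hm : (m : ℝ) + 1 ≠ 0 := by positivity
    rw [intervalIntegral.integral_div, intervalIntegral.integral_const_mul,
      intervalIntegral.integral_comp_mul_left (fun x => Real.cos x) hm, integral_cos, smul_eq_mul]
    field_simp
  simp only [e] at hs
  rw [hs.tsum_eq]
  ring

lemma ae_sin_ne_zero (c d : ℝ) (hc : c ≠ 0) : ∀ᵐ t : ℝ, Real.sin (c * t + d) ≠ 0 := by
  have hcount : (Set.range fun n : ℤ => (n * π - d) / c).Countable := Set.countable_range _
  filter_upwards [hcount.ae_notMem volume] with t ht h
  obtain ⟨n, hn⟩ := Real.sin_eq_zero_iff.1 h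
  exact ht ⟨n, by simp only [hn]; field_simp; ring⟩

/-- The dominating function, uniform in `r ∈ (0, 1]`. -/
lemma abs_log_le {r t : ℝ} (h0 : 0 < r) (h1 : r ≤ 1) (ht : Real.sin t ≠ 0) :
    ‖Real.log (1 - 2 * r * Real.cos t + r ^ 2)‖ ≤ Real.log 4 + 2 * ‖Real.log (Real.sin t)‖ := by
  have hlow : Real.sin t ^ 2 ≤ 1 - 2 * r * Real.cos t + r ^ 2 := by
    nlinarith [sq_nonneg (r - Real.cos t), Real.sin_sq_add_cos_sq t]
  have hup : 1 - 2 * r * Real.cos t + r ^ 2 ≤ 4 := by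
    nlinarith [Real.neg_one_le_cos t]
  have hp : 0 < Real.sin t ^ 2 := by positivity
  have l1 := Real.log_le_log hp hlow
  have l2 := Real.log_le_log (hp.trans_le hlow) hup
  rw [Real.log_pow] at l1
  push_cast at l1
  have h4 : 0 ≤ Real.log 4 := Real.log_nonneg (by norm_num)
  have := neg_abs_le (Real.log (Real.sin t))
  have := abs_nonneg (Real.log (Real.sin t))
  simp only [Real.norm_eq_abs]
  rw [abs_le]
  constructor <;> linarith

lemma bound_integrable (a b : ℝ) :
    IntervalIntegrable (fun t => Real.log 4 + 2 * ‖Real.log (Real.sin t)‖) volume a b :=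
  intervalIntegrable_const.add ((intervalIntegrable_log_sin (a := a) (b := b)).norm.const_mul 2)

lemma ae_sin_ne_zero' : ∀ᵐ t : ℝ, Real.sin t ≠ 0 := by
  simpa using ae_sin_ne_zero 1 0 one_ne_zero

lemma intervalIntegrable_log_two_sub (a b : ℝ) :
    IntervalIntegrable (fun t => Real.log (2 - 2 * Real.cos t)) volume a b := by
  refine (bound_integrable a b).mono_fun' ?_ ?_
  · exact (by fun_prop : Measurable fun t : ℝ =>
      Real.log (2 - 2 * Real.cos t)).aestronglyMeasurable
  · filter_upwards [ae_restrict_of_ae ae_sin_ne_zero'] with t ht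
    rw [show 2 - 2 * Real.cos t = 1 - 2 * 1 * Real.cos t + 1 ^ 2 by ring]
    exact abs_log_le one_pos le_rfl ht

lemma summable_sin_div (x : ℝ) :
    Summable fun m : ℕ => Real.sin ((m + 1) * x) / ((m : ℝ) + 1) ^ 2 := by
  have hs : Summable fun m : ℕ => 1 / ((m : ℝ) + 1) ^ 2 := by
    simpa using (summable_nat_add_iff 1).2 (Real.summable_one_div_nat_pow.2 one_lt_two)
  refine Summable.of_norm_bounded hs fun m => ?_
  rw [norm_div, Real.norm_eq_abs, Real.norm_eq_abs,
    abs_of_pos (by positivity : 0 < ((m : ℝ) + 1) ^ 2)]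
  gcongr
  exact Real.abs_sin_le_one _

lemma integral_log_two_sub (a b : ℝ) :
    ∫ t in a..b, Real.log (2 - 2 * Real.cos t) = -2 * (Cl2 b - Cl2 a) := by
  have hev : ∀ᶠ r : ℝ in 𝓝[<] 1, 0 < r ∧ r < 1 :=
    Ioo_mem_nhdsLT one_pos
  have hr : Tendsto (fun r : ℝ => r) (𝓝[<] 1) (𝓝 1) := tendsto_id.mono_left nhdsWithin_le_nhds
  have hI : Tendsto (fun r : ℝ => ∫ t in a..b, Real.log (1 - 2 * r * Real.cos t + r ^ 2))
      (𝓝[<] 1) (𝓝 (∫ t in a..b, Real.log (2 - 2 * Real.cos t))) := by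
    refine intervalIntegral.tendsto_integral_filter_of_dominated_convergence _ ?_ ?_
      (bound_integrable a b) ?_
    · exact Eventually.of_forall fun r => (by fun_prop : Measurable fun t : ℝ =>
        Real.log (1 - 2 * r * Real.cos t + r ^ 2)).aestronglyMeasurable
    · filter_upwards [hev] with r h
      filter_upwards [ae_sin_ne_zero'] with t ht _
      exact abs_log_le h.1 h.2.le ht
    · filter_upwards [ae_sin_ne_zero'] with t ht _
      have hne : 2 - 2 * Real.cos t ≠ 0 := by
        intro h
        have hc : Real.cos t = 1 := by linarith
        have := Real.sin_sq_add_cos_sq t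
        rw [hc] at this
        exact ht (pow_eq_zero_iff two_ne_zero |>.1 (by linarith))
      refine Tendsto.log ?_ hne
      have hc : Continuous fun r : ℝ => 1 - 2 * r * Real.cos t + r ^ 2 := by fun_prop
      convert! (hc.tendsto 1).comp hr using 2
      ring
  have hS : Tendsto (fun r : ℝ => ∑' m : ℕ, r ^ (m + 1) *
        ((Real.sin ((m + 1) * b) - Real.sin ((m + 1) * a)) / (m + 1) ^ 2)) (𝓝[<] 1)
      (𝓝 (∑' m : ℕ, (Real.sin ((m + 1) * b) - Real.sin ((m + 1) * a)) / ((m : ℝ) + 1) ^ 2)) := by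
    have hs : Summable fun m : ℕ => 2 * (1 / ((m : ℝ) + 1) ^ 2) := by
      simpa using ((summable_nat_add_iff 1).2
        (Real.summable_one_div_nat_pow.2 one_lt_two)).mul_left (2 : ℝ)
    refine tendsto_tsum_of_dominated_convergence hs (fun m => ?_) ?_
    · simpa using (hr.pow (m + 1)).mul_const
        ((Real.sin ((m + 1) * b) - Real.sin ((m + 1) * a)) / ((m : ℝ) + 1) ^ 2)
    · filter_upwards [hev] with r h m
      have hp : 0 < r ^ (m + 1) := pow_pos h.1 _
      have hp1 : r ^ (m + 1) ≤ 1 := pow_le_one₀ h.1.le h.2.le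
      have hd : 0 < ((m : ℝ) + 1) ^ 2 := by positivity
      rw [norm_mul, norm_div, Real.norm_eq_abs, Real.norm_eq_abs, Real.norm_eq_abs,
        abs_of_pos hp, abs_of_pos hd]
      refine (mul_le_of_le_one_left (by positivity) hp1).trans ?_
      rw [mul_one_div]
      gcongr
      rw [abs_le]
      constructor <;> linarith [Real.neg_one_le_sin ((m + 1) * b), Real.sin_le_one ((m + 1) * b),
        Real.neg_one_le_sin ((m + 1) * a), Real.sin_le_one ((m + 1) * a)]
  have hI' := (hS.const_mul (-2)).congr' (by
    filter_upwards [hev] with r h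
    exact (abel_integral h.1 h.2 a b).symm)
  rw [tendsto_nhds_unique hI hI']
  unfold Cl2
  rw [← (summable_sin_div b).tsum_sub (summable_sin_div a)]
  simp only [sub_div]

lemma Cl2_neg (x : ℝ) : Cl2 (-x) = -Cl2 x := by
  unfold Cl2
  rw [← tsum_neg]
  simp only [mul_neg, Real.sin_neg, neg_div]

lemma Cl2_add_two_pi (x : ℝ) : Cl2 (x + 2 * π) = Cl2 x := by
  unfold Cl2
  congr 1
  funext m
  have := Real.sin_add_nat_mul_two_pi ((m + 1) * x) (m + 1)
  push_cast at this
  rw [mul_add, this]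

lemma log_abs_tan_div {p θ : ℝ} (hp : Real.cos p ≠ 0) (hθ : Real.cos θ ≠ 0)
    (hs : Real.sin (θ + p) ≠ 0) (hd : Real.sin (θ - p) ≠ 0) :
    Real.log |(Real.tan θ + Real.tan p) / (Real.tan θ - Real.tan p)| =
      (1 / 2) * (Real.log (2 - 2 * Real.cos (2 * θ + 2 * p))
        - Real.log (2 - 2 * Real.cos (2 * θ + -(2 * p)))) := by
  have key : ∀ y : ℝ, Real.sin y ≠ 0 →
      Real.log (2 - 2 * Real.cos (2 * y)) = Real.log 4 + 2 * Real.log (Real.sin y) := by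
    intro y hy
    have e : 2 - 2 * Real.cos (2 * y) = 4 * Real.sin y ^ 2 := by
      rw [Real.cos_two_mul, Real.sin_sq]
      ring
    rw [e, Real.log_mul (by norm_num) (pow_ne_zero 2 hy), Real.log_pow]
    push_cast
    rfl
  have e : (Real.tan θ + Real.tan p) / (Real.tan θ - Real.tan p)
      = Real.sin (θ + p) / Real.sin (θ - p) := by
    have e1 : Real.tan θ + Real.tan p = Real.sin (θ + p) / (Real.cos θ * Real.cos p) := by
      rw [Real.sin_add, Real.tan_eq_sin_div_cos, Real.tan_eq_sin_div_cos]
      field_simp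
    have e2 : Real.tan θ - Real.tan p = Real.sin (θ - p) / (Real.cos θ * Real.cos p) := by
      rw [Real.sin_sub, Real.tan_eq_sin_div_cos, Real.tan_eq_sin_div_cos]
      field_simp
    rw [e1, e2, div_div_div_cancel_right₀ (mul_ne_zero hθ hp)]
  rw [e, Real.log_abs, Real.log_div hs hd, show 2 * θ + 2 * p = 2 * (θ + p) by ring,
    show 2 * θ + -(2 * p) = 2 * (θ - p) by ring, key _ hs, key _ hd]
  ring

theorem stmt13 :
    ∫ θ in (π / 3)..(π / 2),
        Real.log |(Real.tan θ + Real.sqrt 7) / (Real.tan θ - Real.sqrt 7)| =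
      (1 / 2) * (Cl2 (2 * Real.arctan (Real.sqrt 7) + 2 * π / 3)
          + Cl2 (2 * Real.arctan (Real.sqrt 7) - 2 * π / 3))
        - Cl2 (π + 2 * Real.arctan (Real.sqrt 7)) := by
  have hcp : Real.cos (Real.arctan (Real.sqrt 7)) ≠ 0 := (Real.cos_arctan_pos _).ne'
  have htp : Real.tan (Real.arctan (Real.sqrt 7)) = Real.sqrt 7 := Real.tan_arctan _
  generalize Real.arctan (Real.sqrt 7) = p at hcp htp ⊢
  rw [← htp]
  have hint : ∀ d : ℝ, IntervalIntegrable (fun θ => Real.log (2 - 2 * Real.cos (2 * θ + d)))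
      volume (π / 3) (π / 2) := by
    intro d
    have h := ((intervalIntegrable_log_two_sub (2 * (π / 3) + d) (2 * (π / 2) + d)).comp_add_right
      d).comp_mul_left (c := 2)
    convert! h using 1 <;> ring
  have hval : ∀ d : ℝ, ∫ θ in (π / 3)..(π / 2), Real.log (2 - 2 * Real.cos (2 * θ + d)) =
      -(Cl2 (π + d) - Cl2 (2 * π / 3 + d)) := by
    intro d
    rw [intervalIntegral.integral_comp_mul_add (fun t => Real.log (2 - 2 * Real.cos t))
      two_ne_zero d, integral_log_two_sub, smul_eq_mul, show 2 * (π / 2) + d = π + d by ring,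
      show 2 * (π / 3) + d = 2 * π / 3 + d by ring]
    ring
  have hae : ∀ᵐ θ : ℝ, θ ∈ Set.uIoc (π / 3) (π / 2) →
      Real.log |(Real.tan θ + Real.tan p) / (Real.tan θ - Real.tan p)| =
      (1 / 2) * (Real.log (2 - 2 * Real.cos (2 * θ + 2 * p))
        - Real.log (2 - 2 * Real.cos (2 * θ + -(2 * p)))) := by
    filter_upwards [ae_sin_ne_zero 1 p one_ne_zero, ae_sin_ne_zero 1 (-p) one_ne_zero,
      ae_sin_ne_zero 1 (π / 2) one_ne_zero] with θ h1 h2 h3 _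
    rw [one_mul] at h1 h2 h3
    rw [Real.sin_add_pi_div_two] at h3
    exact log_abs_tan_div hcp h3 h1 h2
  rw [intervalIntegral.integral_congr_ae hae, intervalIntegral.integral_const_mul,
    intervalIntegral.integral_sub (hint _) (hint _), hval, hval]
  have r1 : Cl2 (π + -(2 * p)) = -Cl2 (π + 2 * p) := by
    rw [← Cl2_neg, ← Cl2_add_two_pi (-(π + 2 * p))]
    congr 1
    ring
  have r2 : Cl2 (2 * π / 3 + -(2 * p)) = -Cl2 (2 * p - 2 * π / 3) := by
    rw [← Cl2_neg]
    congr 1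
    ring
  rw [r1, r2, show 2 * π / 3 + 2 * p = 2 * p + 2 * π / 3 by ring]
  ring
end
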